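/- arXiv:2308.01534 — 3 statements merged into one kernel-verified Lean document; each statement's English description precedes it below -/
import Mathlib

section
/- For every p ∈ [1,∞), the fractional cost of the adjusted correlation metric f on the negative edges satisfies Σ_{u∈V} ( Σ_{v∈N_u^-} (1 − f_uv) )^p ≤ 2^p · ( (200/9)^p + 1 + (10/3)^p + 2·(20/3)^p ) · OPT(p)^p. -/
/-!
Fix a clustering `c` attaining `OPT(p)` and let `y` be its disagreement vector. A negative edge
`uv` contributes to the left-hand side only if neither endpoint is in `R₁` and `d_uv ≤ 0.7`.
If `c u = c v`, the edge is itself a disagreement and contributes at most `1`. Otherwise every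
common positive neighbour `w` of `u` and `v` makes `uw` or `vw` a disagreement, so
`|N_u⁺ ∩ N_v⁺| ≤ y u + y v` and the edge contributes at most `(y u + y v) * wt u v`, where
`wt u v = 1 / max Δ_u Δ_v` (`one_sub_adjDist_le`).

The weights `wt` are symmetric, and since only vertices outside `R₁` carry weight, each row sums
to at most `10/3` (`sum_wt_le`). Hence the fractional cost at `u` is at most
`(13/3) * y u + ∑ v, wt u v * y v`. A Schur test for symmetric kernels (`schur_test`) bounds the
`p`-th power sum of the second term by `(10/3)^p * ∑ y^p`, and `(a + b)^p ≤ 2^p * (a^p + b^p)` gives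
the total `2^p * ((13/3)^p + (10/3)^p) * OPT(p)^p`, which is stronger than the bound claimed.
-/

open Finset

noncomputable section

variable {V : Type*} [Fintype V] [DecidableEq V]

/-- Positive neighborhood of `u` (including the positive self-loop at `u`). -/
def Nplus (E : V → V → Prop) [DecidableRel E] (u : V) : Finset V :=
  insert u (Finset.univ.filter fun v => v ≠ u ∧ E u v)

/-- Negative neighborhood of `u`. -/
def Nminus (E : V → V → Prop) [DecidableRel E] (u : V) : Finset V :=
  Finset.univ.filter fun v => v ≠ u ∧ ¬ E u v

/-- The correlation metric `d`. -/
def corrDist (E : V → V → Prop) [DecidableRel E] (u v : V) : ℝ :=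
  if u = v then 0
  else 1 - ((Nplus E u ∩ Nplus E v).card : ℝ) / ((Nplus E u ∪ Nplus E v).card : ℝ)

/-- The set `R₁` of vertices `u` with `|N_u^- ∩ {v : d_uv ≤ 0.7}| ≥ (10/3)·Δ_u`. -/
def R1set (E : V → V → Prop) [DecidableRel E] : Finset V :=
  Finset.univ.filter fun u =>
    (10 / 3 : ℝ) * (Nplus E u).card ≤ ((Nminus E u).filter fun v => corrDist E u v ≤ 0.7).card

/-- The adjusted correlation metric `f`: start from `d`, round negative edges with
`d > 0.7` up to `1`, and set `f_uv = 1` for all `v ≠ u` whenever `u ∈ R₁`. -/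
def adjDist (E : V → V → Prop) [DecidableRel E] (u v : V) : ℝ :=
  if u = v then 0
  else if u ∈ R1set E ∨ v ∈ R1set E then 1
  else if ¬ E u v ∧ 0.7 < corrDist E u v then 1
  else corrDist E u v

/-- A clustering is encoded by a map `c : V → V`; the cluster `C(u)` is the fiber of `c` at `u`. -/
def clusterOf (c : V → V) (u : V) : Finset V :=
  Finset.univ.filter fun w => c w = c u

/-- The number of disagreements incident to `u` with respect to the clustering `c`. -/
def disag (E : V → V → Prop) [DecidableRel E] (c : V → V) (u : V) : ℕ :=
  (Finset.univ.filter fun v =>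
    v ≠ u ∧ ((E u v ∧ c u ≠ c v) ∨ (¬ E u v ∧ c u = c v))).card

/-- `OPT(1)`: the minimum total number of disagreements over all clusterings. -/
def OPT1 (E : V → V → Prop) [DecidableRel E] : ℕ :=
  Finset.univ.inf' ⟨id, Finset.mem_univ id⟩ fun c : V → V => ∑ u, disag E c u

/-- `OPT(p)`: the minimum `ℓ_p`-norm of the disagreement vector over all clusterings. -/
def OPTlp (E : V → V → Prop) [DecidableRel E] (p : ℝ) : ℝ :=
  Finset.univ.inf' ⟨id, Finset.mem_univ id⟩ fun c : V → V =>
    (∑ u, (disag E c u : ℝ) ^ p) ^ (1 / p)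

/-- `OPT(∞)`: the minimum `ℓ_∞`-norm of the disagreement vector over all clusterings. -/
def OPTinf (E : V → V → Prop) [DecidableRel E] : ℕ :=
  Finset.univ.inf' ⟨id, Finset.mem_univ id⟩ fun c : V → V => Finset.univ.sup (disag E c)

/-- The set of bad triangles: triples of distinct vertices spanning exactly two positive
edges and one negative edge. -/
def badTriangles (E : V → V → Prop) [DecidableRel E] : Finset (Finset V) :=
  Finset.univ.filter fun T =>
    ∃ u v w : V, u ≠ v ∧ u ≠ w ∧ v ≠ w ∧ T = {u, v, w} ∧ E u v ∧ E u w ∧ ¬ E v w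

/-! ### The kernel of uncertain negative edges -/

/-- Kernel `1 / max Δ_u Δ_v`, supported on the negative edges with `d_uv ≤ 0.7` and both endpoints
outside `R₁`, which include all negative edges with `f_uv < 1`. -/
def wt (E : V → V → Prop) [DecidableRel E] (u v : V) : ℝ :=
  if v ∈ Nminus E u ∧ u ∉ R1set E ∧ v ∉ R1set E ∧ corrDist E u v ≤ 0.7 then
    1 / max ((Nplus E u).card : ℝ) ((Nplus E v).card : ℝ) else 0

theorem card_Nplus_pos (E : V → V → Prop) [DecidableRel E] (u : V) :
    (0 : ℝ) < (Nplus E u).card := by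
  have : u ∈ Nplus E u := by simp [Nplus]
  exact_mod_cast Finset.card_pos.mpr ⟨u, this⟩

theorem wt_nonneg (E : V → V → Prop) [DecidableRel E] (u v : V) : 0 ≤ wt E u v := by
  unfold wt
  split_ifs <;> positivity

theorem corrDist_comm (E : V → V → Prop) [DecidableRel E] (u v : V) :
    corrDist E u v = corrDist E v u := by
  unfold corrDist
  rw [Finset.inter_comm, Finset.union_comm]
  simp only [eq_comm]

theorem wt_comm (E : V → V → Prop) [DecidableRel E] (hsymm : ∀ u v, E u v ↔ E v u) (u v : V) :
    wt E u v = wt E v u := by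
  unfold wt
  rw [corrDist_comm E u v, max_comm]
  have : v ∈ Nminus E u ↔ u ∈ Nminus E v := by
    simp [Nminus, hsymm u v, eq_comm]
  congr 1
  rw [this]
  apply propext
  tauto

theorem corrDist_nonneg (E : V → V → Prop) [DecidableRel E] (u v : V) : 0 ≤ corrDist E u v := by
  unfold corrDist
  split_ifs
  · exact le_rfl
  · rw [sub_nonneg]
    apply div_le_one_of_le₀ _ (by positivity)
    exact_mod_cast Finset.card_le_card
      (Finset.inter_subset_left.trans Finset.subset_union_left)

/-- A vertex `u` outside `R₁` has fewer than `(10/3) * Δ_u` neighbours in the support of `wt`, each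
of weight at most `1 / Δ_u`. -/
theorem sum_wt_le (E : V → V → Prop) [DecidableRel E] (u : V) : ∑ v, wt E u v ≤ 10 / 3 := by
  by_cases hu : u ∈ R1set E
  · have : ∀ v, wt E u v = 0 := fun v => by simp [wt, hu]
    simp only [this, Finset.sum_const_zero]
    norm_num
  have hpos := card_Nplus_pos E u
  have hcard : (((Nminus E u).filter fun v => corrDist E u v ≤ 0.7).card : ℝ)
      ≤ (10 / 3 : ℝ) * (Nplus E u).card := by
    by_contra h
    exact hu (by simpa only [R1set, Finset.mem_filter, Finset.mem_univ, true_and] using (not_le.mp h).le)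
  have hterm : ∀ v, wt E u v ≤
      if v ∈ (Nminus E u).filter (fun v => corrDist E u v ≤ 0.7) then
        1 / ((Nplus E u).card : ℝ) else 0 := by
    intro v
    unfold wt
    split_ifs with h1 h2 h2
    · exact one_div_le_one_div_of_le hpos (le_max_left _ _)
    · exact absurd (Finset.mem_filter.mpr ⟨h1.1, h1.2.2.2⟩) h2
    · positivity
    · exact le_rfl
  calc ∑ v, wt E u v ≤ _ := Finset.sum_le_sum fun v _ => hterm v
    _ = (((Nminus E u).filter fun v => corrDist E u v ≤ 0.7).card : ℝ)
        * (1 / ((Nplus E u).card : ℝ)) := by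
      rw [Finset.sum_ite_mem, Finset.univ_inter, Finset.sum_const, nsmul_eq_mul]
    _ ≤ 10 / 3 := by
      rw [mul_one_div, div_le_iff₀ hpos]
      exact hcard

/-! ### Charging negative edges to disagreements -/

/-- If a negative edge `uv` is cut by `c`, each common positive neighbour of `u` and `v` lies in a
cluster different from that of `u` or from that of `v`. -/
theorem card_inter_le (E : V → V → Prop) [DecidableRel E] (hsymm : ∀ u v, E u v ↔ E v u)
    (c : V → V) (u v : V) (hv : v ∈ Nminus E u) (hc : c u ≠ c v) :
    (Nplus E u ∩ Nplus E v).card ≤ disag E c u + disag E c v := by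
  unfold disag
  refine le_trans (Finset.card_le_card ?_) (Finset.card_union_le _ _)
  intro w hw
  simp only [Nplus, Nminus, Finset.mem_inter, Finset.mem_insert, Finset.mem_filter,
    Finset.mem_univ, true_and, Finset.mem_union] at hw hv ⊢
  have := hsymm u v
  grind

theorem one_sub_adjDist_le (E : V → V → Prop) [DecidableRel E] (hsymm : ∀ u v, E u v ↔ E v u)
    (c : V → V) (u v : V) (hv : v ∈ Nminus E u) :
    1 - adjDist E u v ≤
      (if c u = c v then 1 else 0) + wt E u v * ((disag E c u : ℝ) + disag E c v) := by
  have hw := wt_nonneg E u v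
  have hv' : v ≠ u ∧ ¬ E u v := by simpa [Nminus] using hv
  have hrhs : (0 : ℝ) ≤ (if c u = c v then 1 else 0) +
      wt E u v * ((disag E c u : ℝ) + disag E c v) := by
    split_ifs <;> positivity
  unfold adjDist
  rw [if_neg hv'.1.symm]
  by_cases h1 : u ∈ R1set E ∨ v ∈ R1set E
  · rw [if_pos h1, sub_self]
    exact hrhs
  rw [if_neg h1]
  by_cases h2 : ¬ E u v ∧ 0.7 < corrDist E u v
  · rw [if_pos h2, sub_self]
    exact hrhs
  rw [if_neg h2]
  by_cases hc : c u = c v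
  · rw [if_pos hc]
    have := corrDist_nonneg E u v
    have : (0 : ℝ) ≤ wt E u v * ((disag E c u : ℝ) + disag E c v) := by positivity
    linarith
  · rw [if_neg hc]
    have hd : corrDist E u v ≤ 0.7 := by
      by_contra h
      exact h2 ⟨hv'.2, not_le.mp h⟩
    have hwt : wt E u v = 1 / max ((Nplus E u).card : ℝ) ((Nplus E v).card : ℝ) :=
      if_pos ⟨hv, fun h => h1 (Or.inl h), fun h => h1 (Or.inr h), hd⟩
    have hmax : max ((Nplus E u).card : ℝ) ((Nplus E v).card : ℝ) ≤
        ((Nplus E u ∪ Nplus E v).card : ℝ) := by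
      apply max_le
      · exact_mod_cast Finset.card_le_card Finset.subset_union_left
      · exact_mod_cast Finset.card_le_card Finset.subset_union_right
    have hpos : 0 < max ((Nplus E u).card : ℝ) ((Nplus E v).card : ℝ) :=
      lt_max_of_lt_left (card_Nplus_pos E u)
    have hint : ((Nplus E u ∩ Nplus E v).card : ℝ) ≤ (disag E c u : ℝ) + disag E c v := by
      exact_mod_cast card_inter_le E hsymm c u v hv hc
    rw [hwt, corrDist, if_neg hv'.1.symm, sub_sub_cancel, zero_add, one_div_mul_eq_div]
    exact div_le_div₀ (by positivity) hint hpos hmax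

theorem sum_one_sub_adjDist_le (E : V → V → Prop) [DecidableRel E]
    (hsymm : ∀ u v, E u v ↔ E v u) (c : V → V) (u : V) :
    ∑ v ∈ Nminus E u, (1 - adjDist E u v) ≤
      13 / 3 * (disag E c u : ℝ) + ∑ v, wt E u v * (disag E c v : ℝ) := by
  have hsame : ∑ v ∈ Nminus E u, (if c u = c v then (1 : ℝ) else 0) ≤ disag E c u := by
    rw [Finset.sum_boole]
    unfold disag
    norm_cast
    apply Finset.card_le_card
    intro v hv
    simp only [Nminus, Finset.mem_filter, Finset.mem_univ, true_and] at hv ⊢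
    tauto
  have hrow := mul_le_mul_of_nonneg_right (sum_wt_le E u) (Nat.cast_nonneg (α := ℝ) (disag E c u))
  have hsub : ∑ v ∈ Nminus E u, wt E u v * ((disag E c u : ℝ) + disag E c v) ≤
      ∑ v, wt E u v * ((disag E c u : ℝ) + disag E c v) :=
    Finset.sum_le_sum_of_subset_of_nonneg (Finset.subset_univ _) fun v _ _ =>
      mul_nonneg (wt_nonneg E u v) (by positivity)
  calc ∑ v ∈ Nminus E u, (1 - adjDist E u v)
      ≤ ∑ v ∈ Nminus E u, ((if c u = c v then (1 : ℝ) else 0) +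
          wt E u v * ((disag E c u : ℝ) + disag E c v)) :=
        Finset.sum_le_sum fun v hv => one_sub_adjDist_le E hsymm c u v hv
    _ ≤ _ := by
      rw [Finset.sum_add_distrib]
      simp only [mul_add, Finset.sum_add_distrib, ← Finset.sum_mul] at hsub ⊢
      linarith

/-! ### Power sums -/

/-- Schur test: a nonnegative symmetric kernel with row sums at most `K` has `ℓ_p` operator norm
at most `K`. -/
theorem schur_test {ι : Type*} [Fintype ι] (w : ι → ι → ℝ) (hw : ∀ u v, 0 ≤ w u v)
    (hcomm : ∀ u v, w u v = w v u) (K : ℝ) (hK : 0 < K) (hrow : ∀ u, ∑ v, w u v ≤ K)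
    (y : ι → ℝ) (hy : ∀ v, 0 ≤ y v) (p : ℝ) (hp : 1 ≤ p) :
    ∑ u, (∑ v, w u v * y v) ^ p ≤ K ^ p * ∑ v, y v ^ p := by
  have hp0 : 0 < p := by linarith
  have hpt : ∀ u, (∑ v, w u v * y v) ^ p ≤ K ^ (p - 1) * ∑ v, w u v * y v ^ p := by
    intro u
    have hS : 0 ≤ ∑ v, w u v := Finset.sum_nonneg fun v _ => hw u v
    have hT : 0 ≤ ∑ v, w u v * y v ^ p :=
      Finset.sum_nonneg fun v _ => mul_nonneg (hw u v) (Real.rpow_nonneg (hy v) p)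
    calc (∑ v, w u v * y v) ^ p
        ≤ ((∑ v, w u v) ^ (1 - p⁻¹) * (∑ v, w u v * y v ^ p) ^ p⁻¹) ^ p :=
          Real.rpow_le_rpow (Finset.sum_nonneg fun v _ => mul_nonneg (hw u v) (hy v))
            (Real.inner_le_weight_mul_Lp_of_nonneg Finset.univ hp (w u) y (hw u) hy) hp0.le
      _ = (∑ v, w u v) ^ (p - 1) * ∑ v, w u v * y v ^ p := by
          rw [Real.mul_rpow (by positivity) (by positivity), ← Real.rpow_mul hS,
            ← Real.rpow_mul hT, inv_mul_cancel₀ hp0.ne', Real.rpow_one, sub_mul, one_mul,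
            inv_mul_cancel₀ hp0.ne']
      _ ≤ _ := mul_le_mul_of_nonneg_right
          (Real.rpow_le_rpow hS (hrow u) (by linarith)) hT
  calc ∑ u, (∑ v, w u v * y v) ^ p
      ≤ ∑ u, K ^ (p - 1) * ∑ v, w u v * y v ^ p := Finset.sum_le_sum fun u _ => hpt u
    _ = K ^ (p - 1) * ∑ v, (∑ u, w v u) * y v ^ p := by
        rw [← Finset.mul_sum, Finset.sum_comm]
        simp only [Finset.sum_mul]
        congr 1
        exact Finset.sum_congr rfl fun v _ => Finset.sum_congr rfl fun u _ => by rw [hcomm u v]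
    _ ≤ K ^ (p - 1) * ∑ v, K * y v ^ p := by
        gcongr with v _
        · exact Real.rpow_nonneg (hy v) p
        · exact hrow v
    _ = K ^ p * ∑ v, y v ^ p := by
        rw [← Finset.mul_sum, ← mul_assoc, ← Real.rpow_add_one hK.ne', sub_add_cancel]

/-- The minimum defining `OPT(p)` is attained. -/
theorem exists_OPTlp_rpow (E : V → V → Prop) [DecidableRel E] (p : ℝ) (hp : 1 ≤ p) :
    ∃ c : V → V, OPTlp E p ^ p = ∑ u, (disag E c u : ℝ) ^ p := by
  obtain ⟨c, -, hc⟩ := Finset.exists_mem_eq_inf' ⟨id, Finset.mem_univ (id : V → V)⟩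
    fun c : V → V => (∑ u, (disag E c u : ℝ) ^ p) ^ (1 / p)
  refine ⟨c, ?_⟩
  rw [OPTlp, hc, ← Real.rpow_mul (by positivity), one_div_mul_cancel (by linarith), Real.rpow_one]

theorem add_rpow_le (a b p : ℝ) (ha : 0 ≤ a) (hb : 0 ≤ b) (hp : 0 ≤ p) :
    (a + b) ^ p ≤ 2 ^ p * (a ^ p + b ^ p) := by
  have hm : 0 ≤ max a b := ha.trans (le_max_left a b)
  calc (a + b) ^ p ≤ (2 * max a b) ^ p :=
        Real.rpow_le_rpow (by positivity)
          (by linarith [le_max_left a b, le_max_right a b]) hp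
    _ = 2 ^ p * max a b ^ p := Real.mul_rpow (by norm_num) hm
    _ ≤ _ := by
        gcongr
        have := Real.rpow_nonneg ha p
        have := Real.rpow_nonneg hb p
        rcases max_cases a b with h | h <;> rw [h.1] <;> linarith

/-- bound on the fractional cost of the adjusted correlation metric on the
negative edges in the `ℓ_p`-norm objective. -/
theorem lp_frac_cost_neg (E : V → V → Prop) [DecidableRel E]
    (hsymm : ∀ u v, E u v ↔ E v u) (p : ℝ) (hp : 1 ≤ p) :
    ∑ u, (∑ v ∈ Nminus E u, (1 - adjDist E u v)) ^ p ≤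
      (2 : ℝ) ^ p * ((200 / 9 : ℝ) ^ p + 1 + (10 / 3 : ℝ) ^ p + 2 * (20 / 3 : ℝ) ^ p)
        * OPTlp E p ^ p := by
  obtain ⟨c, hc⟩ := exists_OPTlp_rpow E p hp
  rw [hc]
  have hp0 : 0 ≤ p := by linarith
  set y : V → ℝ := fun u => (disag E c u : ℝ) with hy
  have hy0 : ∀ u, 0 ≤ y u := fun u => Nat.cast_nonneg _
  have hB0 : ∀ u, 0 ≤ ∑ v, wt E u v * y v := fun u =>
    Finset.sum_nonneg fun v _ => mul_nonneg (wt_nonneg E u v) (hy0 v)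
  have hS0 : 0 ≤ ∑ u, y u ^ p := Finset.sum_nonneg fun u _ => Real.rpow_nonneg (hy0 u) p
  have hA0 : ∀ u, 0 ≤ ∑ v ∈ Nminus E u, (1 - adjDist E u v) := by
    intro u
    refine Finset.sum_nonneg fun v _ => ?_
    unfold adjDist
    split_ifs with h1 h2 h3
    · norm_num
    · norm_num
    · norm_num
    · rw [corrDist, if_neg h1, sub_sub_cancel]
      positivity
  have hpt : ∀ u, (∑ v ∈ Nminus E u, (1 - adjDist E u v)) ^ p ≤
      2 ^ p * ((13 / 3) ^ p * y u ^ p + (∑ v, wt E u v * y v) ^ p) := by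
    intro u
    refine (Real.rpow_le_rpow (hA0 u) (sum_one_sub_adjDist_le E hsymm c u) hp0).trans ?_
    refine (add_rpow_le _ _ p (mul_nonneg (by norm_num) (hy0 u)) (hB0 u) hp0).trans_eq ?_
    rw [Real.mul_rpow (by norm_num) (hy0 u)]
  have hschur := schur_test (wt E) (wt_nonneg E) (wt_comm E hsymm) (10 / 3) (by norm_num)
    (sum_wt_le E) y hy0 p hp
  calc ∑ u, (∑ v ∈ Nminus E u, (1 - adjDist E u v)) ^ p
      ≤ ∑ u, 2 ^ p * ((13 / 3) ^ p * y u ^ p + (∑ v, wt E u v * y v) ^ p) :=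
        Finset.sum_le_sum fun u _ => hpt u
    _ = 2 ^ p * ((13 / 3) ^ p * ∑ u, y u ^ p + ∑ u, (∑ v, wt E u v * y v) ^ p) := by
        rw [← Finset.mul_sum, Finset.sum_add_distrib, ← Finset.mul_sum]
    _ ≤ 2 ^ p * ((13 / 3) ^ p * ∑ u, y u ^ p + (10 / 3) ^ p * ∑ u, y u ^ p) := by
        gcongr
    _ = 2 ^ p * ((13 / 3) ^ p + (10 / 3) ^ p) * ∑ u, y u ^ p := by ring
    _ ≤ _ := by
        have h1 : (13 / 3 : ℝ) ^ p ≤ (200 / 9) ^ p :=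
          Real.rpow_le_rpow (by norm_num) (by norm_num) hp0
        have h2 : (0 : ℝ) ≤ (20 / 3) ^ p := by positivity
        have h3 : (0 : ℝ) ≤ 2 ^ p := by positivity
        exact mul_le_mul_of_nonneg_right
          (mul_le_mul_of_nonneg_left (by linarith) h3) hS0
end
end

section
/- The fractional cost of the correlation metric d on the positive edges in the ℓ1-norm objective is a 3-approximation: Σ_{u∈V} Σ_{v∈N_u^+} d_uv ≤ 3 · OPT(1). -/
/-!
For a positive edge `uv`, `d_uv = |N_u ∆ N_v| / |N_u ∪ N_v|`, and each `w ∈ N_u ∆ N_v` closes a bad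
triangle (two positive edges, one negative) on `u, v`. So the fractional cost is a weighted count of
bad triangles: it equals `2 ∑ t(u,v,w)`, where `t(u,v,w) = 1 / |N_u ∪ N_v|` if `u` is the centre of
a bad triangle with leaves `v, w`, and `0` otherwise (`corrDist_eq`, `cost_eq`).

Every clustering makes a disagreement on some edge of each bad triangle (`one_le_disagInd`), so
`t(u,v,w)` may be charged to a disagreeing edge among `uv`, `uw`, `vw`. A disagreeing edge `xy`,
taken as an ordered pair, receives at most `3` in total (`charge_le`):
* if it is positive, `|N_x ∆ N_y| / |N_x ∪ N_y| ≤ 1` as the edge `uv` and its reverse, and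
  `2 |N_x \ N_y| / |N_x| ≤ 2` as the edge `uw`;
* if it is negative, `2 |N_x ∩ N_y| / |N_x| ≤ 2` as the edge `vw`.
-/

open Finset

noncomputable section

variable {V : Type*} [Fintype V] [DecidableEq V]

lemma mem_Nplus (E : V → V → Prop) [DecidableRel E] (u v : V) :
    v ∈ Nplus E u ↔ v = u ∨ E u v := by
  by_cases h : v = u <;> simp [Nplus, h]

lemma mem_Nplus_comm (E : V → V → Prop) [DecidableRel E]
    (hsymm : ∀ u v, E u v ↔ E v u) (u v : V) : v ∈ Nplus E u ↔ u ∈ Nplus E v := by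
  rw [mem_Nplus, mem_Nplus, hsymm u v, eq_comm]

/-- The weight `1 / |N_u ∪ N_v|` of the bad triangle with centre `u` and leaves `v, w`, and `0` when
the triple is not a bad triangle. The membership condition forces `u, v, w` to be distinct when `E`
is symmetric. -/
def triWeight (E : V → V → Prop) [DecidableRel E] (u v w : V) : ℝ :=
  if v ∈ Nplus E u ∧ w ∈ Nplus E u ∧ w ∉ Nplus E v then
    ((Nplus E u ∪ Nplus E v).card : ℝ)⁻¹ else 0

/-- The indicator that the pair `u, v` is a disagreement of the clustering `c`. -/
def disagInd (E : V → V → Prop) [DecidableRel E] (c : V → V) (u v : V) : ℝ :=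
  if v ≠ u ∧ ((E u v ∧ c u ≠ c v) ∨ (¬ E u v ∧ c u = c v)) then 1 else 0

lemma disag_eq_sum (E : V → V → Prop) [DecidableRel E] (c : V → V) (u : V) :
    (disag E c u : ℝ) = ∑ v, disagInd E c u v := by
  simp only [disag, disagInd, Finset.sum_boole]

lemma disagInd_nonneg (E : V → V → Prop) [DecidableRel E] (c : V → V) (u v : V) :
    0 ≤ disagInd E c u v := by
  unfold disagInd; split_ifs <;> norm_num

lemma disagInd_comm (E : V → V → Prop) [DecidableRel E]
    (hsymm : ∀ u v, E u v ↔ E v u) (c : V → V) (u v : V) :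
    disagInd E c u v = disagInd E c v u := by
  simp only [disagInd, hsymm u v, ne_comm (a := v), ne_comm (a := c u), eq_comm (a := c u)]

lemma triWeight_nonneg (E : V → V → Prop) [DecidableRel E] (u v w : V) :
    0 ≤ triWeight E u v w := by
  unfold triWeight; split_ifs <;> positivity

lemma Nplus_card_pos (E : V → V → Prop) [DecidableRel E] (u : V) :
    (0 : ℝ) < ((Nplus E u).card : ℝ) := by
  have : u ∈ Nplus E u := by simp [mem_Nplus]
  exact_mod_cast Finset.card_pos.mpr ⟨u, this⟩

/-- Each bad triangle carries at least one disagreement: two positive edges kept inside one cluster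
put the negative edge inside it too. -/
lemma one_le_disagInd (E : V → V → Prop) [DecidableRel E]
    (hsymm : ∀ u v, E u v ↔ E v u) (c : V → V) (u v w : V)
    (hv : v ∈ Nplus E u) (hw : w ∈ Nplus E u) (hvw : w ∉ Nplus E v) :
    1 ≤ disagInd E c u v + disagInd E c u w + disagInd E c v w := by
  have h1 := disagInd_nonneg E c u v
  have h2 := disagInd_nonneg E c u w
  have h3 := disagInd_nonneg E c v w
  have huv : v ≠ u := by rintro rfl; exact hvw hw
  have huw : w ≠ u := by rintro rfl; exact hvw ((mem_Nplus_comm E hsymm _ _).1 hv)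
  rw [mem_Nplus] at hv hw hvw
  push Not at hvw
  have ev : E u v := hv.resolve_left huv
  have ew : E u w := hw.resolve_left huw
  by_cases a : c u = c v
  · by_cases b : c u = c w
    · have : disagInd E c v w = 1 := if_pos ⟨hvw.1, Or.inr ⟨hvw.2, a.symm.trans b⟩⟩
      linarith
    · have : disagInd E c u w = 1 := if_pos ⟨huw, Or.inl ⟨ew, b⟩⟩
      linarith
  · have : disagInd E c u v = 1 := if_pos ⟨huv, Or.inl ⟨ev, a⟩⟩
    linarith

lemma sum_triWeight (E : V → V → Prop) [DecidableRel E] (u v : V) (hv : v ∈ Nplus E u) :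
    ∑ w, triWeight E u v w =
      ((Nplus E u \ Nplus E v).card : ℝ) * ((Nplus E u ∪ Nplus E v).card : ℝ)⁻¹ := by
  simp only [triWeight, hv, true_and]
  rw [← Finset.sum_filter, Finset.sum_const, nsmul_eq_mul]
  congr 3
  ext w; simp

lemma sum_triWeight_add (E : V → V → Prop) [DecidableRel E]
    (hsymm : ∀ u v, E u v ↔ E v u) (u v : V) (hv : v ∈ Nplus E u) :
    ∑ w, triWeight E u v w + ∑ w, triWeight E v u w =
      1 - ((Nplus E u ∩ Nplus E v).card : ℝ) / ((Nplus E u ∪ Nplus E v).card : ℝ) := by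
  have hu := (mem_Nplus_comm E hsymm u v).1 hv
  rw [sum_triWeight E u v hv, sum_triWeight E v u hu, Finset.union_comm (Nplus E v)]
  have h1 := Finset.card_sdiff_add_card_inter (Nplus E u) (Nplus E v)
  have h2 := Finset.card_sdiff_add_card (Nplus E v) (Nplus E u)
  rw [Finset.union_comm] at h2
  have h1' : ((Nplus E u \ Nplus E v).card : ℝ) + ((Nplus E u ∩ Nplus E v).card : ℝ)
    = ((Nplus E u).card : ℝ) := by exact_mod_cast h1
  have h2' : ((Nplus E v \ Nplus E u).card : ℝ) + ((Nplus E u).card : ℝ)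
    = ((Nplus E u ∪ Nplus E v).card : ℝ) := by exact_mod_cast h2
  have h0 := Nplus_card_pos E u
  have hpos : (0 : ℝ) < ((Nplus E u ∪ Nplus E v).card : ℝ) := by
    have : (0 : ℝ) ≤ ((Nplus E v \ Nplus E u).card : ℝ) := by positivity
    linarith
  field_simp
  linarith

/-- On positive edges, the correlation metric is the total weight of the bad triangles that have
`uv` as a marked positive edge, with centre `u` or centre `v`. -/
lemma corrDist_eq (E : V → V → Prop) [DecidableRel E]
    (hsymm : ∀ u v, E u v ↔ E v u) (u v : V) (hv : v ∈ Nplus E u) :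
    corrDist E u v = ∑ w, triWeight E u v w + ∑ w, triWeight E v u w := by
  by_cases h : u = v
  · subst h
    have : ∀ w, triWeight E u u w = 0 := fun w => if_neg fun h => h.2.2 h.2.1
    simp [corrDist, this]
  · rw [sum_triWeight_add E hsymm u v hv, corrDist, if_neg h]

lemma triWeight_eq_zero (E : V → V → Prop) [DecidableRel E] (u v w : V)
    (h : ¬ (v ∈ Nplus E u ∧ w ∈ Nplus E u ∧ w ∉ Nplus E v)) : triWeight E u v w = 0 :=
  if_neg h

/-- Any weights bounded by `1 / |N_x|` and supported on `N_x` sum to at most `1`. -/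
lemma sum_le_one (E : V → V → Prop) [DecidableRel E] (x : V) (f : V → ℝ)
    (hf : ∀ z, f z ≤ if z ∈ Nplus E x then ((Nplus E x).card : ℝ)⁻¹ else 0) :
    ∑ z, f z ≤ 1 := by
  refine (Finset.sum_le_sum fun z _ => hf z).trans ?_
  rw [← Finset.sum_filter, Finset.sum_const, nsmul_eq_mul, Finset.filter_univ_mem]
  exact (mul_inv_cancel₀ (Nplus_card_pos E x).ne').le

lemma sum_mid_le_one (E : V → V → Prop) [DecidableRel E] (x y : V) :
    ∑ v, triWeight E x v y ≤ 1 := by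
  refine sum_le_one E x _ fun v => ?_
  unfold triWeight
  split_ifs with h1 h2 h2
  · have : ((Nplus E x).card : ℝ) ≤ ((Nplus E x ∪ Nplus E v).card : ℝ) := by
      exact_mod_cast Finset.card_le_card Finset.subset_union_left
    exact inv_anti₀ (Nplus_card_pos E x) this
  · exact absurd h1.1 h2
  · positivity
  · exact le_rfl

lemma sum_centre_le_one (E : V → V → Prop) [DecidableRel E]
    (hsymm : ∀ u v, E u v ↔ E v u) (x y : V) :
    ∑ u, triWeight E u x y ≤ 1 := by
  refine sum_le_one E x _ fun u => ?_
  unfold triWeight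
  split_ifs with h1 h2 h2
  · have : ((Nplus E x).card : ℝ) ≤ ((Nplus E u ∪ Nplus E x).card : ℝ) := by
      exact_mod_cast Finset.card_le_card Finset.subset_union_right
    exact inv_anti₀ (Nplus_card_pos E x) this
  · exact absurd ((mem_Nplus_comm E hsymm _ _).1 h1.1) h2
  · positivity
  · exact le_rfl

/-- The total charge received by an ordered pair `(x, y)`. A positive pair is never the negative edge
of a bad triangle and a negative pair is never one of its positive edges, so only one kind of bound
is active at a time. -/
lemma charge_le (E : V → V → Prop) [DecidableRel E]
    (hsymm : ∀ u v, E u v ↔ E v u) (x y : V) :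
    (∑ w, triWeight E x y w + ∑ w, triWeight E y x w) + 2 * ∑ v, triWeight E x v y
      + 2 * ∑ u, triWeight E u x y ≤ 3 := by
  by_cases h : y ∈ Nplus E x
  · have h1 := sum_triWeight_add E hsymm x y h
    have h2 := sum_mid_le_one E x y
    have h3 : ∑ u, triWeight E u x y = 0 :=
      Finset.sum_eq_zero fun u _ => triWeight_eq_zero E _ _ _ fun hh => hh.2.2 h
    have h4 : (0 : ℝ) ≤ ((Nplus E x ∩ Nplus E y).card : ℝ) / ((Nplus E x ∪ Nplus E y).card : ℝ) := by
      positivity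
    linarith
  · have h1 : ∑ w, triWeight E x y w = 0 :=
      Finset.sum_eq_zero fun u _ => triWeight_eq_zero E _ _ _ fun hh => h hh.1
    have h2 : ∑ w, triWeight E y x w = 0 :=
      Finset.sum_eq_zero fun u _ => triWeight_eq_zero E _ _ _ fun hh =>
        h ((mem_Nplus_comm E hsymm _ _).2 hh.1)
    have h3 : ∑ v, triWeight E x v y = 0 :=
      Finset.sum_eq_zero fun u _ => triWeight_eq_zero E _ _ _ fun hh => h hh.2.1
    have h4 := sum_centre_le_one E hsymm x y
    linarith

lemma triWeight_le (E : V → V → Prop) [DecidableRel E]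
    (hsymm : ∀ u v, E u v ↔ E v u) (c : V → V) (u v w : V) :
    triWeight E u v w ≤ disagInd E c u v * triWeight E u v w
      + disagInd E c u w * triWeight E u v w + disagInd E c v w * triWeight E u v w := by
  by_cases h : v ∈ Nplus E u ∧ w ∈ Nplus E u ∧ w ∉ Nplus E v
  · have h1 := one_le_disagInd E hsymm c u v w h.1 h.2.1 h.2.2
    have h2 := mul_le_mul_of_nonneg_right h1 (triWeight_nonneg E u v w)
    linarith
  · simp [triWeight_eq_zero E u v w h]

lemma cost_eq (E : V → V → Prop) [DecidableRel E] (hsymm : ∀ u v, E u v ↔ E v u) :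
    ∑ u, ∑ v ∈ Nplus E u, corrDist E u v = 2 * ∑ u, ∑ v, ∑ w, triWeight E u v w := by
  have h1 : ∀ u, ∑ v ∈ Nplus E u, corrDist E u v
      = ∑ v, (∑ w, triWeight E u v w + ∑ w, triWeight E v u w) := by
    intro u
    rw [Finset.sum_congr rfl fun v hv => corrDist_eq E hsymm u v hv]
    refine Finset.sum_subset (Finset.subset_univ _) fun v _ hv => ?_
    rw [Finset.sum_eq_zero fun w _ => triWeight_eq_zero E u v w fun hh => hv hh.1,
      Finset.sum_eq_zero fun w _ => triWeight_eq_zero E v u w fun hh =>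
        hv ((mem_Nplus_comm E hsymm _ _).2 hh.1), add_zero]
  rw [Finset.sum_congr rfl fun u _ => h1 u]
  simp only [Finset.sum_add_distrib]
  rw [Finset.sum_comm (f := fun u v => ∑ w, triWeight E v u w)]
  ring

lemma cost_le (E : V → V → Prop) [DecidableRel E] (hsymm : ∀ u v, E u v ↔ E v u) (c : V → V) :
    ∑ u, ∑ v ∈ Nplus E u, corrDist E u v ≤ 3 * ∑ u, ∑ v, disagInd E c u v := by
  have hS : ∑ u, ∑ v, ∑ w, triWeight E u v w ≤
      ∑ x, ∑ y, disagInd E c x y * ∑ w, triWeight E x y w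
      + ∑ x, ∑ y, disagInd E c x y * ∑ v, triWeight E x v y
      + ∑ x, ∑ y, disagInd E c x y * ∑ u, triWeight E u x y := by
    refine (Finset.sum_le_sum fun u _ => Finset.sum_le_sum fun v _ => Finset.sum_le_sum fun w _ =>
      triWeight_le E hsymm c u v w).trans (le_of_eq ?_)
    simp only [Finset.sum_add_distrib, Finset.mul_sum]
    congr 1
    · congr 1
      exact Finset.sum_congr rfl fun u _ => Finset.sum_comm
    · rw [Finset.sum_comm]
      exact Finset.sum_congr rfl fun u _ => Finset.sum_comm
  -- The charge to `uv` is averaged over both orientations, whose sum is already at most `1`.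
  have hsw : ∑ x, ∑ y, disagInd E c x y * ∑ w, triWeight E y x w
      = ∑ x, ∑ y, disagInd E c x y * ∑ w, triWeight E x y w := by
    rw [Finset.sum_comm]
    exact Finset.sum_congr rfl fun x _ => Finset.sum_congr rfl fun y _ => by
      rw [disagInd_comm E hsymm]
  have hb : ∑ x, ∑ y, disagInd E c x y *
      ((∑ w, triWeight E x y w + ∑ w, triWeight E y x w) + 2 * ∑ v, triWeight E x v y
        + 2 * ∑ u, triWeight E u x y) ≤ ∑ x, ∑ y, disagInd E c x y * 3 :=
    Finset.sum_le_sum fun x _ => Finset.sum_le_sum fun y _ =>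
      mul_le_mul_of_nonneg_left (charge_le E hsymm x y) (disagInd_nonneg E c x y)
  simp only [mul_add, Finset.sum_add_distrib, mul_left_comm _ (2 : ℝ), ← Finset.mul_sum,
    ← Finset.sum_mul] at hb
  rw [cost_eq E hsymm]
  linarith

/-- the fractional cost of the correlation metric on the positive edges in
the `ℓ_1`-norm objective is at most `3 · OPT(1)`. -/
theorem l1_frac_cost_pos_corr (E : V → V → Prop) [DecidableRel E]
    (hsymm : ∀ u v, E u v ↔ E v u) :
    ∑ u, ∑ v ∈ Nplus E u, corrDist E u v ≤ 3 * (OPT1 E : ℝ) := by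
  obtain ⟨c, -, hc⟩ := Finset.exists_mem_eq_inf' (⟨id, Finset.mem_univ id⟩ :
    (Finset.univ : Finset (V → V)).Nonempty) (fun c : V → V => ∑ u, disag E c u)
  have hO : (OPT1 E : ℝ) = ∑ u, ∑ v, disagInd E c u v := by
    rw [OPT1, hc, Nat.cast_sum]
    exact Finset.sum_congr rfl fun u _ => disag_eq_sum E c u
  rw [hO]
  exact cost_le E hsymm c
end
end

section
/- Let H be the bipartite graph with parts R₂ and R₁ in which u ∈ R₂ is adjacent to v ∈ R₁ if and only if (u,v) ∈ E⁺ and d_uv ≤ 1/4. Then for every p ∈ [1,∞), Σ_{u∈R₂} deg_H(u)^p ≤ 4^{p−1} · Σ_{v∈R₁} |N_v^+|^p. -/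
/-!
The bound is a double count over the edges of `H`. Writing `deg u ^ p` as the sum of
`deg u ^ (p - 1)` over the neighbours `v` of `u`, each term is controlled by `v` alone: all
neighbours of `u` are positive, so `deg u ≤ Δ_u`, and `d_uv ≤ 1/4` forces the positive
neighbourhoods of `u` and `v` to overlap so much that `Δ_u ≤ 4 Δ_v` (`card_Nplus_le`; in fact
`4/3` would do). After exchanging the sums, `v` is counted at most `Δ_v` times, with weight at
most `(4 Δ_v) ^ (p - 1)`.
-/

open Finset

noncomputable section

variable {V : Type*} [Fintype V] [DecidableEq V]

/-- Since `|N_u ∩ N_v| ≥ (3/4) |N_u ∪ N_v|` when `d_uv ≤ 1/4`, positive degrees are comparable. -/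
theorem card_Nplus_le (E : V → V → Prop) [DecidableRel E] {u v : V} (huv : u ≠ v)
    (hd : corrDist E u v ≤ 1 / 4) :
    ((Nplus E u).card : ℝ) ≤ 4 * ((Nplus E v).card : ℝ) := by
  rw [corrDist, if_neg huv] at hd
  have hu : ((Nplus E u).card : ℝ) ≤ (Nplus E u ∪ Nplus E v).card := by
    exact_mod_cast card_le_card subset_union_left
  have hi : ((Nplus E u ∩ Nplus E v).card : ℝ) ≤ (Nplus E v).card := by
    exact_mod_cast card_le_card inter_subset_right
  have hne : (Nplus E u).Nonempty := ⟨u, mem_insert_self _ _⟩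
  have hpos : (0 : ℝ) < (Nplus E u).card := by exact_mod_cast hne.card_pos
  have h : (3 / 4 : ℝ) ≤
      ((Nplus E u ∩ Nplus E v).card : ℝ) / ((Nplus E u ∪ Nplus E v).card : ℝ) := by linarith
  rw [le_div_iff₀ (hpos.trans_le hu)] at h
  linarith

/-- double-counting bound for the auxiliary bipartite graph `H` between
`R₂` and `R₁`, with `u ∈ R₂` adjacent to `v ∈ R₁` iff `(u,v) ∈ E⁺` and `d_uv ≤ 1/4`. -/
theorem aux_bipartite_degree_bound (E : V → V → Prop) [DecidableRel E]
    (hsymm : ∀ u v, E u v ↔ E v u) (p : ℝ) (hp : 1 ≤ p) :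
    ∑ u ∈ Finset.univ \ R1set E,
        ((((R1set E).filter fun v => v ≠ u ∧ E u v ∧ corrDist E u v ≤ 1 / 4).card : ℝ)) ^ p ≤
      (4 : ℝ) ^ (p - 1) * ∑ v ∈ R1set E, ((Nplus E v).card : ℝ) ^ p := by
  classical
  have hp0 : 0 ≤ p - 1 := by linarith
  set D : V → Finset V := fun u =>
    (R1set E).filter fun v => v ≠ u ∧ E u v ∧ corrDist E u v ≤ 1 / 4 with hD
  have hdeg : ∀ u, ((D u).card : ℝ) ≤ (Nplus E u).card := fun u => by
    refine mod_cast card_le_card fun v hv => ?_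
    simp only [hD, mem_filter] at hv
    simp [Nplus, hv.2.1, hv.2.2.1]
  calc ∑ u ∈ univ \ R1set E, ((D u).card : ℝ) ^ p
      = ∑ u ∈ univ \ R1set E, ∑ _v ∈ D u, ((D u).card : ℝ) ^ (p - 1) := by
        refine sum_congr rfl fun u _ => ?_
        -- At an isolated `u` both sides vanish because `p ≠ 0`.
        rw [sum_const, nsmul_eq_mul, ← Real.rpow_one_add' (by positivity) (by linarith)]
        congr 1
        ring
    _ ≤ ∑ u ∈ univ \ R1set E, ∑ v ∈ D u, (4 * ((Nplus E v).card : ℝ)) ^ (p - 1) := by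
        refine sum_le_sum fun u _ => sum_le_sum fun v hv => ?_
        simp only [hD, mem_filter] at hv
        exact Real.rpow_le_rpow (by positivity)
          ((hdeg u).trans (card_Nplus_le E hv.2.1.symm hv.2.2.2)) hp0
    _ = ∑ v ∈ R1set E, ∑ _u ∈ (univ \ R1set E).filter (fun u => v ∈ D u),
          (4 * ((Nplus E v).card : ℝ)) ^ (p - 1) := by
        refine sum_comm' fun u v => ?_
        simp only [hD, mem_filter]
        tauto
    _ ≤ ∑ v ∈ R1set E, (4 : ℝ) ^ (p - 1) * ((Nplus E v).card : ℝ) ^ p := by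
        refine sum_le_sum fun v _ => ?_
        have hcard : ((((univ \ R1set E).filter fun u => v ∈ D u).card : ℕ) : ℝ)
            ≤ (Nplus E v).card := by
          refine mod_cast card_le_card fun u hu => ?_
          simp only [hD, mem_filter] at hu
          simp [Nplus, hu.2.2.1.symm, (hsymm u v).1 hu.2.2.2.1]
        have hsplit : ((Nplus E v).card : ℝ) ^ p
            = (Nplus E v).card * ((Nplus E v).card : ℝ) ^ (p - 1) := by
          rw [← Real.rpow_one_add' (by positivity) (by linarith)]
          congr 1
          ring
        rw [sum_const, nsmul_eq_mul, Real.mul_rpow (by norm_num) (by positivity), hsplit,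
          mul_left_comm]
        gcongr
    _ = (4 : ℝ) ^ (p - 1) * ∑ v ∈ R1set E, ((Nplus E v).card : ℝ) ^ p := (mul_sum _ _ _).symm
end
end
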